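/- Let Γ₊ = {κ ∈ ℝⁿ : κᵢ > 0 ∀i}, U ⊆ ℝ^m open with (p₁(κ),…,p_m(κ)) ∈ U for all κ ∈ Γ₊, ψ : U → ℝ be C², and suppose f(κ) = ψ(p₁(κ),…,p_m(κ)) is positive, strictly monotone (∂f/∂κᵢ > 0 on Γ₊), homogeneous of degree one (f(λκ) = λf(κ) for λ > 0), and inverse concave, i.e. the function f̃(κ) = 1/f(κ₁⁻¹,…,κₙ⁻¹) is concave on Γ₊. Let A be an n×n real matrix, diagonalisable with eigenvalues κ ∈ Γ₊, let g be symmetric positive definite with gA = Aᵀg, and set F(A) = ψ(P₁(A),…,P_m(A)). Then for every n×n real matrix η with gη = ηᵀg (η is g-selfadjoint), d²F(A)(η,η) + 2·dF(A)(η·A⁻¹·η) ≥ 2·F(A)⁻¹·(dF(A)η)². -/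

import Mathlib

open Matrix

attribute [local instance] Matrix.normedAddCommGroup Matrix.normedSpace

/-- `P_k(A) = trace (A ^ k)`, bundled as the vector `(P₁(A), …, P_m(A))`. -/
noncomputable def Pvec (n m : ℕ) (A : Matrix (Fin n) (Fin n) ℝ) : Fin m → ℝ :=
  fun l => (A ^ ((l : ℕ) + 1)).trace

/-- `p_k(κ) = ∑ i, κ i ^ k`, bundled as the vector `(p₁(κ), …, p_m(κ))`. -/
def pvec (n m : ℕ) (κ : Fin n → ℝ) : Fin m → ℝ :=
  fun l => ∑ i, κ i ^ ((l : ℕ) + 1)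

theorem aux_sym (n m : ℕ) (σ : Equiv.Perm (Fin n)) (x : Fin n → ℝ) :
    pvec n m (fun i => x (σ i)) = pvec n m x := by
  funext l
  exact Equiv.sum_comp σ (fun i => x i ^ ((l : ℕ) + 1))

theorem aux_second (G G1 : ℝ → ℝ) (G2 : ℝ) (h1 : ∀ᶠ t in nhds (0:ℝ), HasDerivAt G (G1 t) t)
    (h2 : HasDerivAt G1 G2 0) (h3 : ∀ᶠ t in nhds (0:ℝ), G t + G (-t) ≤ 2 * G 0) : G2 ≤ 0 := by
  by_contra! hc
  have hneg : Filter.Tendsto (fun t : ℝ => -t) (nhds 0) (nhds 0) := by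
    simpa using (continuous_neg (G := ℝ)).tendsto 0
  have hK : ∀ᶠ t in nhds (0:ℝ), HasDerivAt (fun t => G t + G (-t)) (G1 t - G1 (-t)) t := by
    filter_upwards [h1, hneg.eventually h1] with t ha hb
    exact (ha.add (hb.comp t (hasDerivAt_neg t))).congr_deriv (by ring)
  have hd : deriv (fun t => G t + G (-t)) =ᶠ[nhds 0] fun t => G1 t - G1 (-t) :=
    hK.mono fun t ht => ht.deriv
  have hd2 : HasDerivAt (fun t => G1 t - G1 (-t)) (2 * G2) 0 := by
    have h2' : HasDerivAt G1 G2 (-0) := by simpa using h2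
    exact (h2.sub (h2'.comp 0 (hasDerivAt_neg 0))).congr_deriv (by ring)
  have e2 : deriv (deriv (fun t => G t + G (-t))) 0 = 2 * G2 := by
    rw [hd.deriv_eq, hd2.deriv]
  have hmin : IsLocalMin (fun t => G t + G (-t)) 0 := by
    apply isLocalMin_of_deriv_deriv_pos
    · rw [e2]; linarith
    · rw [hd.eq_of_nhds]; simp
    · exact hK.self_of_nhds.continuousAt
  have hconst : (fun t => G t + G (-t)) =ᶠ[nhds 0] fun _ => 2 * G 0 := by
    filter_upwards [hmin, h3] with t ha hb
    simp at ha
    linarith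
  have : deriv (fun t => G t + G (-t)) =ᶠ[nhds 0] fun _ => 0 := by
    have := hconst.deriv
    refine this.trans ?_
    simp
  rw [this.deriv_eq] at e2
  simp at e2
  linarith

theorem aux_contDiff_pow (n k : ℕ) :
    ContDiff ℝ 2 (fun X : Matrix (Fin n) (Fin n) ℝ => X ^ k) := by
  induction k with
  | zero => simpa using contDiff_const
  | succ k ih =>
    have hX : ∀ i j, ContDiff ℝ 2 (fun X : Matrix (Fin n) (Fin n) ℝ => X i j) := fun i j =>
      contDiff_pi.1 (contDiff_pi.1 (contDiff_id (E := Matrix (Fin n) (Fin n) ℝ)) i) j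
    refine contDiff_pi.2 fun i => contDiff_pi.2 fun j => ?_
    simp only [pow_succ, Matrix.mul_apply]
    refine ContDiff.sum fun l _ => ?_
    exact (contDiff_pi.1 (contDiff_pi.1 ih i) l).mul (hX l j)

theorem aux_contDiff_Pvec (n m : ℕ) : ContDiff ℝ 2 (Pvec n m) := by
  refine contDiff_pi.2 fun l => ?_
  simp only [Pvec, Matrix.trace, Matrix.diag]
  refine ContDiff.sum fun i _ => ?_
  exact contDiff_pi.1 (contDiff_pi.1 (aux_contDiff_pow n _) i) i

theorem aux_conj (n m : ℕ) (S X Y : Matrix (Fin n) (Fin n) ℝ) (hS : IsUnit S)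
    (h : X * S = S * Y) : Pvec n m X = Pvec n m Y := by
  funext l
  simp only [Pvec]
  have hd := (Matrix.isUnit_iff_isUnit_det _).1 hS
  have hX : X ^ ((l:ℕ)+1) * S = S * Y ^ ((l:ℕ)+1) :=
    (show SemiconjBy S Y X from h.symm).pow_right ((l:ℕ)+1) |>.symm
  have : X ^ ((l:ℕ)+1) = S * Y ^ ((l:ℕ)+1) * S⁻¹ := by
    rw [← hX, Matrix.mul_nonsing_inv_cancel_right _ _ hd]
  rw [this, Matrix.trace_mul_comm, ← Matrix.mul_assoc, Matrix.nonsing_inv_mul _ hd, Matrix.one_mul]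

theorem aux_diag (n m : ℕ) (κ : Fin n → ℝ) : Pvec n m (Matrix.diagonal κ) = pvec n m κ := by
  funext l
  simp [Pvec, pvec, Matrix.diagonal_pow, Matrix.trace_diagonal]

theorem aux_spectral (n : ℕ) (X : Matrix (Fin n) (Fin n) ℝ) (hX : X.IsHermitian) :
    ∃ V : Matrix (Fin n) (Fin n) ℝ, V * Vᵀ = 1 ∧ Vᵀ * V = 1 ∧
      X = V * Matrix.diagonal hX.eigenvalues * Vᵀ := by
  refine ⟨hX.eigenvectorUnitary, ?_, ?_, ?_⟩
  · simpa [Matrix.star_eq_conjTranspose] using Unitary.mul_star_self_of_mem hX.eigenvectorUnitary.2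
  · simpa [Matrix.star_eq_conjTranspose] using Unitary.star_mul_self_of_mem hX.eigenvectorUnitary.2
  · have := hX.spectral_theorem
    rw [Unitary.conjStarAlgAut_apply] at this
    simpa [Matrix.star_eq_conjTranspose, Function.comp_def] using this

/-- Schur plus Birkhoff: a symmetric concave function of the diagonal dominates that of the
eigenvalues. -/
theorem aux_schur (n : ℕ) (φ : (Fin n → ℝ) → ℝ)
    (hφ : ConcaveOn ℝ {κ : Fin n → ℝ | ∀ i, 0 < κ i} φ)
    (hsym : ∀ (σ : Equiv.Perm (Fin n)) (x : Fin n → ℝ), φ (fun i => x (σ i)) = φ x)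
    (V : Matrix (Fin n) (Fin n) ℝ) (h1 : V * Vᵀ = 1) (h2 : Vᵀ * V = 1)
    (ν : Fin n → ℝ) (hν : ∀ i, 0 < ν i) :
    φ ν ≤ φ (fun i => (V * Matrix.diagonal ν * Vᵀ) i i) := by
  let D : Matrix (Fin n) (Fin n) ℝ := Matrix.of fun i j => V i j ^ 2
  have hD : D ∈ doublyStochastic ℝ (Fin n) := by
    rw [mem_doublyStochastic_iff_sum]
    refine ⟨fun i j => sq_nonneg _, fun i => ?_, fun j => ?_⟩
    · have := congrFun (congrFun h1 i) i
      simpa [Matrix.mul_apply, D, sq] using this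
    · have := congrFun (congrFun h2 j) j
      simpa [Matrix.mul_apply, D, sq] using this
  have hDν : (fun i => (V * Matrix.diagonal ν * Vᵀ) i i) = D *ᵥ ν := by
    funext i
    rw [Matrix.mul_apply]
    simp only [Matrix.mul_diagonal, Matrix.transpose_apply, Matrix.mulVec, dotProduct, D,
      Matrix.of_apply]
    exact Finset.sum_congr rfl fun j _ => by ring
  rw [hDν]
  have hconv := hφ.convex_ge (φ ν)
  let L : Matrix (Fin n) (Fin n) ℝ →ₗ[ℝ] (Fin n → ℝ) :=
    { toFun := fun M => M *ᵥ ν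
      map_add' := fun M N => Matrix.add_mulVec M N ν
      map_smul' := fun c M => Matrix.smul_mulVec c M ν }
  have hc2 := hconv.linear_preimage L
  rw [← SetLike.mem_coe, doublyStochastic_eq_convexHull_permMatrix] at hD
  have := convexHull_min ?_ hc2 hD
  · exact this.2
  rintro _ ⟨σ, rfl⟩
  have e : L (σ.permMatrix ℝ) = fun i => ν (σ i) := by
    funext i
    simp [L, Matrix.permMatrix_mulVec]
  simp only [Set.mem_preimage, e, Set.mem_ofPred_eq]
  exact ⟨fun i => hν _, (hsym σ ν).ge⟩

theorem aux_simdiag (n : ℕ)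
    (A : Matrix (Fin n) (Fin n) ℝ) (κ : Fin n → ℝ) (hκ : ∀ i, 0 < κ i)
    (S : Matrix (Fin n) (Fin n) ℝ) (hS : IsUnit S)
    (hdiag : S⁻¹ * A * S = Matrix.diagonal κ)
    (g : Matrix (Fin n) (Fin n) ℝ) (hg : g.PosDef)
    (hsa : g * A = Aᵀ * g) (η : Matrix (Fin n) (Fin n) ℝ) (hη : g * η = ηᵀ * g) :
    ∃ (T B : Matrix (Fin n) (Fin n) ℝ) (μ : Fin n → ℝ), IsUnit T ∧ (∀ i, 0 < μ i) ∧
      A * T = T * Matrix.diagonal μ ∧ η * T = T * B ∧ B.IsHermitian := by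
  obtain ⟨W, hW1, hW2, hgW⟩ := aux_spectral n g hg.1
  set s : Fin n → ℝ := fun i => √(hg.1.eigenvalues i) with hs
  have hs0 : ∀ i, s i ≠ 0 := fun i => (Real.sqrt_pos.2 (hg.eigenvalues_pos i)).ne'
  set R := Matrix.diagonal s * Wᵀ with hR
  set Q := W * Matrix.diagonal (fun i => (s i)⁻¹) with hQ
  have hRQ : R * Q = 1 := by
    rw [hR, hQ, Matrix.mul_assoc, ← Matrix.mul_assoc Wᵀ, hW2, Matrix.one_mul,
      Matrix.diagonal_mul_diagonal]
    simp [hs0]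
  have hQR : Q * R = 1 := mul_eq_one_comm.1 hRQ
  have hgR : g = Rᵀ * R := by
    have hss : Matrix.diagonal hg.1.eigenvalues = Matrix.diagonal s * Matrix.diagonal s := by
      rw [Matrix.diagonal_mul_diagonal]
      congr 1
      funext i
      exact (Real.mul_self_sqrt (hg.eigenvalues_pos i).le).symm
    refine hgW.trans ?_
    rw [hR, Matrix.transpose_mul, Matrix.diagonal_transpose, Matrix.transpose_transpose, hss]
    simp only [Matrix.mul_assoc]
  clear_value R Q
  have key : ∀ M : Matrix (Fin n) (Fin n) ℝ, g * M = Mᵀ * g → (R * M * Q).IsHermitian := by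
    intro M hM
    have hQt : Qᵀ * Rᵀ = 1 := by rw [← Matrix.transpose_mul, hRQ, Matrix.transpose_one]
    have h : (R * M * Q)ᵀ = R * M * Q := by
      calc (R * M * Q)ᵀ = Qᵀ * (Mᵀ * Rᵀ) := by simp [Matrix.transpose_mul]
        _ = Qᵀ * (Mᵀ * (Rᵀ * R)) * Q := by
            simp only [Matrix.mul_assoc, hRQ, Matrix.mul_one]
        _ = Qᵀ * Rᵀ * (R * M * Q) := by
            rw [← hgR, ← hM, hgR]; simp only [Matrix.mul_assoc]
        _ = _ := by rw [hQt, Matrix.one_mul]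
    simpa [Matrix.IsHermitian] using h
  have hA := key A hsa
  have hE := key η hη
  obtain ⟨V, hV1, hV2, hAV⟩ := aux_spectral n _ hA
  have hmu : ∀ i, 0 < hA.eigenvalues i := by
    intro i
    have h1 : hA.eigenvalues i ∈ spectrum ℝ (R * A * Q) := by
      rw [hA.spectrum_real_eq_range_eigenvalues]; exact ⟨i, rfl⟩
    let u : (Matrix (Fin n) (Fin n) ℝ)ˣ := ⟨R, Q, hRQ, hQR⟩
    have h2 : spectrum ℝ (R * A * Q) = spectrum ℝ A := spectrum.units_conjugate (u := u)
    have hd := (Matrix.isUnit_iff_isUnit_det _).1 hS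
    let v : (Matrix (Fin n) (Fin n) ℝ)ˣ :=
      ⟨S⁻¹, S, Matrix.nonsing_inv_mul _ hd, Matrix.mul_nonsing_inv _ hd⟩
    have h3 : spectrum ℝ (S⁻¹ * A * S) = spectrum ℝ A := spectrum.units_conjugate (u := v)
    rw [h2, ← h3, hdiag, spectrum_diagonal] at h1
    obtain ⟨j, hj⟩ := h1
    rw [← hj]; exact hκ j
  have hT1 : (Q * V) * (Vᵀ * R) = 1 := by
    rw [Matrix.mul_assoc, ← Matrix.mul_assoc V, hV1, Matrix.one_mul, hQR]
  refine ⟨Q * V, Vᵀ * (R * η * Q) * V, hA.eigenvalues, ?_, hmu, ?_, ?_, ?_⟩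
  · exact IsUnit.of_mul_eq_one _ hT1
  · calc A * (Q * V) = (Q * R) * A * Q * V := by rw [hQR, Matrix.one_mul, Matrix.mul_assoc]
      _ = Q * (R * A * Q) * V := by simp only [Matrix.mul_assoc]
      _ = _ := by
        conv_lhs => rw [hAV]
        simp only [Matrix.mul_assoc, hV2, Matrix.mul_one]
  · calc η * (Q * V) = ((Q * V) * (Vᵀ * R)) * (η * (Q * V)) := by rw [hT1, Matrix.one_mul]
      _ = _ := by simp only [Matrix.mul_assoc]
  · have := Matrix.isHermitian_conjTranspose_mul_mul V hE
    simpa using this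

theorem aux_posDef (n : ℕ) (B : Matrix (Fin n) (Fin n) ℝ) (hB : B.IsHermitian)
    (d : Fin n → ℝ) (hd : ∀ i, 0 < d i) :
    ∀ᶠ t in nhds (0:ℝ), (Matrix.diagonal d + t • B).PosDef := by
  set C := ∑ i, ∑ j, |B i j| with hC
  have hC0 : 0 ≤ C := Finset.sum_nonneg fun i _ => Finset.sum_nonneg fun j _ => abs_nonneg _
  have hev : ∀ᶠ t in nhds (0:ℝ), ∀ i, |t| * C < d i := by
    rw [Filter.eventually_all]
    intro i
    have : Filter.Tendsto (fun t : ℝ => |t| * C) (nhds 0) (nhds 0) := by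
      have : Continuous (fun t : ℝ => |t| * C) := by fun_prop
      simpa using this.tendsto 0
    exact this.eventually (gt_mem_nhds (hd i))
  filter_upwards [hev] with t ht
  refine Matrix.PosDef.of_dotProduct_mulVec_pos ?_ ?_
  · refine (Matrix.isHermitian_diagonal d).add ?_
    rw [Matrix.IsHermitian, Matrix.conjTranspose_smul, hB.eq]; simp
  intro x hx
  have hbound : |x ⬝ᵥ (B *ᵥ x)| ≤ C * ∑ k, x k ^ 2 := by
    have hxx : ∀ i j, |x i * x j| ≤ ∑ k, x k ^ 2 := by
      intro i j
      have hi := Finset.single_le_sum (f := fun k => x k ^ 2) (fun k _ => sq_nonneg _)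
        (Finset.mem_univ i)
      have hj := Finset.single_le_sum (f := fun k => x k ^ 2) (fun k _ => sq_nonneg _)
        (Finset.mem_univ j)
      rw [abs_le]
      constructor <;> nlinarith [sq_nonneg (x i + x j), sq_nonneg (x i - x j)]
    simp only [dotProduct, Matrix.mulVec, Finset.mul_sum]
    refine (Finset.abs_sum_le_sum_abs _ _).trans ?_
    rw [← Finset.mul_sum, hC, Finset.sum_mul]
    refine Finset.sum_le_sum fun i _ => ?_
    refine (Finset.abs_sum_le_sum_abs _ _).trans ?_
    rw [Finset.sum_mul]
    refine Finset.sum_le_sum fun j _ => ?_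
    calc |x i * (B i j * x j)| = |B i j| * |x i * x j| := by rw [← abs_mul]; ring_nf
      _ ≤ _ := by gcongr; exact hxx i j
  have hstar : star x = x := by simp
  rw [hstar, Matrix.add_mulVec, dotProduct_add, Matrix.smul_mulVec, dotProduct_smul, smul_eq_mul]
  have h1 : |t| * C * ∑ k, x k ^ 2 < x ⬝ᵥ (Matrix.diagonal d *ᵥ x) := by
    simp only [dotProduct, Matrix.mulVec_diagonal, Finset.mul_sum]
    obtain ⟨k, hk⟩ := Function.ne_iff.1 hx
    refine Finset.sum_lt_sum (fun i _ => ?_) ⟨k, Finset.mem_univ k, ?_⟩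
    · nlinarith [sq_nonneg (x i), ht i]
    · have : 0 < x k ^ 2 := by
        have : x k ≠ 0 := hk
        positivity
      nlinarith [ht k]
  have h2 : |t * (x ⬝ᵥ (B *ᵥ x))| ≤ |t| * C * ∑ k, x k ^ 2 := by
    rw [abs_mul, mul_assoc]; gcongr
  linarith [(abs_le.1 h2).1]

theorem aux_unit (n : ℕ) (Z : Matrix (Fin n) (Fin n) ℝ) :
    ∀ᶠ t in nhds (0:ℝ), IsUnit (1 - t • Z).det := by
  have hc : Continuous fun t : ℝ => (1 - t • Z).det := by
    apply Continuous.matrix_det; fun_prop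
  have := hc.continuousAt.eventually_ne (x := 0) (y := 0) (by simp)
  exact this.mono fun t ht => isUnit_iff_ne_zero.2 ht

theorem aux_resolvent (n : ℕ) (Z : Matrix (Fin n) (Fin n) ℝ) (s t : ℝ)
    (hs : IsUnit (1 - s • Z).det) (ht : IsUnit (1 - t • Z).det) :
    (1 - s • Z)⁻¹ - (1 - t • Z)⁻¹ = (s - t) • ((1 - s • Z)⁻¹ * Z * (1 - t • Z)⁻¹) := by
  have h : (s - t) • Z = (1 - t • Z) - (1 - s • Z) := by
    rw [sub_smul]; abel
  rw [← Matrix.smul_mul, ← Matrix.mul_smul, h, Matrix.mul_sub, Matrix.sub_mul,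
    Matrix.nonsing_inv_mul _ hs, Matrix.mul_nonsing_inv_cancel_right _ _ ht, Matrix.one_mul]

theorem aux_cont (n : ℕ) (Z : Matrix (Fin n) (Fin n) ℝ) (t : ℝ)
    (ht : IsUnit (1 - t • Z).det) : ContinuousAt (fun s : ℝ => (1 - s • Z)⁻¹) t := by
  have hc : Continuous fun t : ℝ => (1 - t • Z).det := by
    apply Continuous.matrix_det; fun_prop
  have ha : Continuous fun t : ℝ => (1 - t • Z).adjugate := by
    apply Continuous.matrix_adjugate; fun_prop
  simp only [Matrix.inv_def, Ring.inverse_eq_inv']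
  exact (hc.continuousAt.inv₀ ht.ne_zero).smul ha.continuousAt

theorem aux_deriv1 (n : ℕ) (A Z : Matrix (Fin n) (Fin n) ℝ) (t : ℝ)
    (hu : ∀ᶠ s in nhds t, IsUnit (1 - s • Z).det) :
    HasDerivAt (fun s : ℝ => A * (1 - s • Z)⁻¹)
      (A * ((1 - t • Z)⁻¹ * Z * (1 - t • Z)⁻¹)) t := by
  have ht := hu.self_of_nhds
  refine hasDerivAt_iff_tendsto_slope.2 ?_
  have hc := aux_cont n Z t ht
  have hlim : Filter.Tendsto (fun s : ℝ => A * ((1 - s • Z)⁻¹ * Z * (1 - t • Z)⁻¹))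
      (nhdsWithin t {t}ᶜ) (nhds (A * ((1 - t • Z)⁻¹ * Z * (1 - t • Z)⁻¹))) :=
    (((hc.tendsto.mul_const Z).mul_const _).const_mul A).mono_left nhdsWithin_le_nhds
  refine hlim.congr' ?_
  filter_upwards [nhdsWithin_le_nhds hu, self_mem_nhdsWithin] with s hs hne
  have hne' : s - t ≠ 0 := sub_ne_zero.2 hne
  rw [slope_def_module, ← Matrix.mul_sub, aux_resolvent n Z s t hs ht, Matrix.mul_smul, smul_smul,
    inv_mul_cancel₀ hne', one_smul]

theorem aux_deriv2 (n : ℕ) (A Z : Matrix (Fin n) (Fin n) ℝ) :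
    HasDerivAt (fun s : ℝ => A * ((1 - s • Z)⁻¹ * Z * (1 - s • Z)⁻¹))
      (A * ((2:ℝ) • (Z * Z))) 0 := by
  have hu := aux_unit n Z
  refine hasDerivAt_iff_tendsto_slope.2 ?_
  have hc := aux_cont n Z 0 hu.self_of_nhds
  have hc0 : Filter.Tendsto (fun s : ℝ => (1 - s • Z)⁻¹) (nhds 0) (nhds 1) := by
    simpa using hc.tendsto
  have hlim : Filter.Tendsto (fun s : ℝ => A * (Z * Z * (1 - s • Z)⁻¹ +
        (1 - s • Z)⁻¹ * Z * Z * (1 - s • Z)⁻¹))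
      (nhdsWithin 0 {0}ᶜ) (nhds (A * ((2:ℝ) • (Z * Z)))) := by
    have := (((hc0.const_mul (Z * Z)).add
      (((hc0.mul_const Z).mul_const Z).mul hc0)).const_mul A).mono_left
        (nhdsWithin_le_nhds (s := {(0:ℝ)}ᶜ))
    simpa [two_smul] using this
  refine hlim.congr' ?_
  filter_upwards [nhdsWithin_le_nhds hu, self_mem_nhdsWithin] with s hs hne
  have hne' : s ≠ 0 := hne
  set W := (1 - s • Z)⁻¹ with hW
  have e1 : W * (1 - s • Z) = 1 := Matrix.nonsing_inv_mul _ hs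
  have e2 : (1 - s • Z) * W = 1 := Matrix.mul_nonsing_inv _ hs
  have f1 : W = 1 + s • (W * Z) := by
    rw [Matrix.mul_sub, Matrix.mul_one, Matrix.mul_smul] at e1
    exact sub_eq_iff_eq_add.1 e1
  have f2 : W = 1 + s • (Z * W) := by
    rw [Matrix.sub_mul, Matrix.one_mul, Matrix.smul_mul] at e2
    exact sub_eq_iff_eq_add.1 e2
  have f3 : W * Z * W - Z = s • (Z * Z * W + W * Z * Z * W) := by
    have g1 : Z * W = Z + s • (Z * Z * W) := by
      conv_lhs => rw [f2]
      rw [Matrix.mul_add, Matrix.mul_one, Matrix.mul_smul, Matrix.mul_assoc]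
    have g2 : W * Z * W = Z * W + s • (W * Z * Z * W) := by
      conv_lhs => enter [1,1]; rw [f1]
      simp only [Matrix.add_mul, Matrix.one_mul, Matrix.smul_mul]
    rw [g2, smul_add]
    conv_lhs => enter [1,1]; rw [g1]
    abel
  rw [slope_def_module, ← Matrix.mul_sub]
  simp only [zero_smul, sub_zero, inv_one, Matrix.one_mul, Matrix.mul_one]
  rw [f3, Matrix.mul_smul, smul_smul, inv_mul_cancel₀ hne', one_smul]

theorem aux_key (n m : ℕ) (ψ : (Fin m → ℝ) → ℝ)
    (hinvconc : ConcaveOn ℝ {κ : Fin n → ℝ | ∀ i, 0 < κ i}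
      (fun κ : Fin n → ℝ => (ψ (pvec n m fun i => (κ i)⁻¹))⁻¹))
    (A T B η : Matrix (Fin n) (Fin n) ℝ) (μ : Fin n → ℝ) (hT : IsUnit T) (hμ : ∀ i, 0 < μ i)
    (hAT : A * T = T * Matrix.diagonal μ) (hη : η * T = T * B) (hA : IsUnit A.det) (t : ℝ)
    (hu : IsUnit (1 - t • (A⁻¹ * η)).det) (X : Matrix (Fin n) (Fin n) ℝ)
    (hX : X = Matrix.diagonal (fun i => (μ i)⁻¹) + t • (-(Matrix.diagonal (fun i => (μ i)⁻¹) * B *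
      Matrix.diagonal (fun i => (μ i)⁻¹)))) (hXp : X.PosDef) :
    (ψ (Pvec n m (A * (1 - t • (A⁻¹ * η))⁻¹)))⁻¹ ≤
      (ψ (pvec n m fun i => (X i i)⁻¹))⁻¹ := by
  set E := Matrix.diagonal (fun i => (μ i)⁻¹) with hE
  have hDE : Matrix.diagonal μ * E = 1 := by
    rw [hE, Matrix.diagonal_mul_diagonal]
    simp [fun i => (hμ i).ne']
  obtain ⟨V, hV1, hV2, hXV⟩ := aux_spectral n X hXp.1
  have hν := hXp.eigenvalues_pos
  generalize hXp.1.eigenvalues = ν at hXV hν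
  have hAT' : A⁻¹ * T = T * E := by
    have : A * (T * E) = T := by
      rw [← Matrix.mul_assoc, hAT, Matrix.mul_assoc, hDE, Matrix.mul_one]
    conv_lhs => rw [← this]
    rw [Matrix.nonsing_inv_mul_cancel_left _ _ hA]
  set M := 1 - t • (A⁻¹ * η) with hM
  have hNT : M * A⁻¹ * T = T * X := by
    have h1 : A⁻¹ * η * (T * E) = T * (E * B * E) := by
      calc A⁻¹ * η * (T * E) = A⁻¹ * (η * T) * E := by simp only [Matrix.mul_assoc]
        _ = (A⁻¹ * T) * B * E := by rw [hη]; simp only [Matrix.mul_assoc]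
        _ = _ := by rw [hAT']; simp only [Matrix.mul_assoc]
    rw [Matrix.mul_assoc, hAT', hM, Matrix.sub_mul, Matrix.one_mul, Matrix.smul_mul, h1, hX,
      Matrix.mul_add, Matrix.mul_smul, Matrix.mul_neg, smul_neg, sub_eq_add_neg]
  have hY : A * M⁻¹ * (M * A⁻¹) = 1 := by
    rw [Matrix.mul_assoc, Matrix.nonsing_inv_mul_cancel_left _ _ hu, Matrix.mul_nonsing_inv _ hA]
  have hNTV : M * A⁻¹ * (T * V) = T * V * Matrix.diagonal ν := by
    rw [← Matrix.mul_assoc, hNT, hXV]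
    simp only [Matrix.mul_assoc, hV2, Matrix.mul_one]
  have hνν : Matrix.diagonal ν * Matrix.diagonal (fun i => (ν i)⁻¹) = 1 := by
    rw [Matrix.diagonal_mul_diagonal]
    simp [fun i => (hν i).ne']
  have hYTV : A * M⁻¹ * (T * V) = T * V * Matrix.diagonal (fun i => (ν i)⁻¹) := by
    have h1 : A * M⁻¹ * (T * V) * Matrix.diagonal ν = T * V := by
      rw [Matrix.mul_assoc, ← hNTV, ← Matrix.mul_assoc, hY, Matrix.one_mul]
    calc A * M⁻¹ * (T * V) = A * M⁻¹ * (T * V) * (Matrix.diagonal ν *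
          Matrix.diagonal (fun i => (ν i)⁻¹)) := by rw [hνν, Matrix.mul_one]
      _ = _ := by rw [← Matrix.mul_assoc, h1]
  have hTV : IsUnit (T * V) := hT.mul (IsUnit.of_mul_eq_one _ hV1)
  rw [aux_conj n m _ _ _ hTV hYTV, aux_diag]
  have := aux_schur n _ hinvconc (fun σ x => by
    simp only
    rw [aux_sym n m σ (fun i => (x i)⁻¹)]) V hV1 hV2 ν hν
  rw [← hXV] at this
  exact this

theorem aux_main_ineq (n m : ℕ) (ψ : (Fin m → ℝ) → ℝ)
    (hinvconc : ConcaveOn ℝ {κ : Fin n → ℝ | ∀ i, 0 < κ i}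
      (fun κ : Fin n → ℝ => (ψ (pvec n m fun i => (κ i)⁻¹))⁻¹))
    (A T B η : Matrix (Fin n) (Fin n) ℝ) (μ : Fin n → ℝ) (hT : IsUnit T) (hμ : ∀ i, 0 < μ i)
    (hAT : A * T = T * Matrix.diagonal μ) (hη : η * T = T * B) (hA : IsUnit A.det)
    (hB : B.IsHermitian) :
    ∀ᶠ t in nhds (0:ℝ), (ψ (Pvec n m (A * (1 - t • (A⁻¹ * η))⁻¹)))⁻¹ +
      (ψ (Pvec n m (A * (1 - (-t) • (A⁻¹ * η))⁻¹)))⁻¹ ≤ 2 * (ψ (Pvec n m A))⁻¹ := by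
  have hneg : Filter.Tendsto (fun t : ℝ => -t) (nhds 0) (nhds 0) := by
    simpa using (continuous_neg (G := ℝ)).tendsto 0
  have hB' : (-(Matrix.diagonal (fun i => (μ i)⁻¹) * B *
      Matrix.diagonal (fun i => (μ i)⁻¹))).IsHermitian := by
    have := Matrix.isHermitian_conjTranspose_mul_mul (Matrix.diagonal (fun i => (μ i)⁻¹)) hB
    simpa [Matrix.diagonal_conjTranspose] using this.neg
  have hp := aux_posDef n _ hB' (fun i => (μ i)⁻¹) (fun i => inv_pos.2 (hμ i))
  have hu := aux_unit n (A⁻¹ * η)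
  filter_upwards [hp, hneg.eventually hp, hu, hneg.eventually hu] with t p1 p2 u1 u2
  have k1 := aux_key n m ψ hinvconc A T B η μ hT hμ hAT hη hA t u1 _ rfl p1
  have k2 := aux_key n m ψ hinvconc A T B η μ hT hμ hAT hη hA (-t) u2 _ rfl p2
  have hc := And.right hinvconc
    (show (fun i => (Matrix.diagonal (fun i => (μ i)⁻¹) +
        t • (-(Matrix.diagonal (fun i => (μ i)⁻¹) * B *
          Matrix.diagonal (fun i => (μ i)⁻¹)))) i i) ∈ {κ : Fin n → ℝ | ∀ i, 0 < κ i} from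
      fun i => p1.diag_pos (i := i))
    (show (fun i => (Matrix.diagonal (fun i => (μ i)⁻¹) +
        (-t) • (-(Matrix.diagonal (fun i => (μ i)⁻¹) * B *
          Matrix.diagonal (fun i => (μ i)⁻¹)))) i i) ∈ {κ : Fin n → ℝ | ∀ i, 0 < κ i} from
      fun i => p2.diag_pos (i := i))
    (show (0:ℝ) ≤ 1/2 by norm_num) (show (0:ℝ) ≤ 1/2 by norm_num) (by norm_num)
  rw [aux_conj n m T A _ hT hAT, aux_diag]
  have e : ((1/2 : ℝ) • (fun i => (Matrix.diagonal (fun i => (μ i)⁻¹) +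
        t • (-(Matrix.diagonal (fun i => (μ i)⁻¹) * B *
          Matrix.diagonal (fun i => (μ i)⁻¹)))) i i) +
      (1/2 : ℝ) • (fun i => (Matrix.diagonal (fun i => (μ i)⁻¹) +
        (-t) • (-(Matrix.diagonal (fun i => (μ i)⁻¹) * B *
          Matrix.diagonal (fun i => (μ i)⁻¹)))) i i) : Fin n → ℝ) = fun i => (μ i)⁻¹ := by
    funext i
    simp only [Pi.add_apply, Pi.smul_apply, Matrix.add_apply, Matrix.smul_apply, smul_eq_mul,
      Matrix.diagonal_apply_eq]
    ring
  rw [e] at hc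
  simp only [inv_inv, smul_eq_mul] at hc
  linarith

theorem aux_chain {E : Type*} [NormedAddCommGroup E] [NormedSpace ℝ E] (F : E → ℝ) (A η ζ : E)
    (hF : ContDiffAt ℝ 2 F A) (Y Y1 : ℝ → E) (hY0 : Y 0 = A) (hY10 : Y1 0 = η)
    (d1 : HasDerivAt Y η 0) (d2 : HasDerivAt Y1 ζ 0) :
    HasDerivAt (fun t => fderiv ℝ F (Y t) (Y1 t))
      (fderiv ℝ (fderiv ℝ F) A η η + fderiv ℝ F A ζ) 0 := by
  have hF2 : DifferentiableAt ℝ (fderiv ℝ F) A :=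
    (hF.fderiv_right (m := 1) (by norm_num)).differentiableAt (by norm_num)
  subst hY0 hY10
  exact (hF2.hasFDerivAt.comp_hasDerivAt (0:ℝ) d1).clm_apply d2

theorem aux_calc (n : ℕ) (F : Matrix (Fin n) (Fin n) ℝ → ℝ) (A η : Matrix (Fin n) (Fin n) ℝ)
    (hA : IsUnit A.det) (hF : ContDiffAt ℝ 2 F A) (hpos : 0 < F A)
    (h : ∀ᶠ t in nhds (0:ℝ), (F (A * (1 - t • (A⁻¹ * η))⁻¹))⁻¹ +
      (F (A * (1 - (-t) • (A⁻¹ * η))⁻¹))⁻¹ ≤ 2 * (F A)⁻¹) :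
    fderiv ℝ (fderiv ℝ F) A η η + 2 * fderiv ℝ F A (η * A⁻¹ * η)
        ≥ 2 * (F A)⁻¹ * (fderiv ℝ F A η) ^ 2 := by
  set Z := A⁻¹ * η with hZ
  have hAZ : A * Z = η := Matrix.mul_nonsing_inv_cancel_left _ _ hA
  set Y : ℝ → Matrix (Fin n) (Fin n) ℝ := fun t => A * (1 - t • Z)⁻¹ with hY
  set Y1 : ℝ → Matrix (Fin n) (Fin n) ℝ :=
    fun t => A * ((1 - t • Z)⁻¹ * Z * (1 - t • Z)⁻¹) with hY1
  have hY0 : Y 0 = A := by simp [hY]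
  have hY10 : Y1 0 = η := by simp [hY1, hAZ]
  have hu := aux_unit n Z
  have d1 : ∀ᶠ t in nhds (0:ℝ), HasDerivAt Y (Y1 t) t :=
    hu.eventually_nhds.mono fun t ht => aux_deriv1 n A Z t ht
  have d2 : HasDerivAt Y1 ((2:ℝ) • (η * A⁻¹ * η)) 0 := by
    have := aux_deriv2 n A Z
    have e : A * ((2:ℝ) • (Z * Z)) = (2:ℝ) • (η * A⁻¹ * η) := by
      rw [Matrix.mul_smul, ← Matrix.mul_assoc, hAZ, hZ, Matrix.mul_assoc]
    rw [e] at this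
    exact this
  have hYc : Filter.Tendsto Y (nhds 0) (nhds A) := by
    have := d1.self_of_nhds.continuousAt.tendsto
    rwa [hY0] at this
  have hFd : ∀ᶠ X in nhds A, DifferentiableAt ℝ F X :=
    (hF.eventually (by simp)).mono fun X hX => hX.differentiableAt (by norm_num)
  have hFne : ∀ᶠ X in nhds A, F X ≠ 0 := hF.continuousAt.eventually_ne hpos.ne'
  have dh : ∀ᶠ t in nhds (0:ℝ), HasDerivAt (fun t => F (Y t)) (fderiv ℝ F (Y t) (Y1 t)) t := by
    filter_upwards [d1, hYc.eventually hFd] with t h1 h2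
    exact h2.hasFDerivAt.comp_hasDerivAt t h1
  have dG : ∀ᶠ t in nhds (0:ℝ), HasDerivAt (fun t => (F (Y t))⁻¹)
      (-(fderiv ℝ F (Y t) (Y1 t)) / (F (Y t)) ^ 2) t := by
    filter_upwards [dh, hYc.eventually hFne] with t h1 h2
    exact h1.fun_inv h2
  have dh2 : HasDerivAt (fun t => fderiv ℝ F (Y t) (Y1 t))
      (fderiv ℝ (fderiv ℝ F) A η η + fderiv ℝ F A ((2:ℝ) • (η * A⁻¹ * η))) 0 :=
    aux_chain F A η _ hF Y Y1 hY0 hY10 (hY10 ▸ d1.self_of_nhds) d2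
  have hne0 : F (Y 0) ^ 2 ≠ 0 := by rw [hY0]; positivity
  have dG2 := dh2.fun_neg.fun_div (dh.self_of_nhds.fun_pow 2) hne0
  have hfin := aux_second _ _ _ dG dG2 (by simpa only [hY0] using h)
  rw [hY0, hY10, map_smul, smul_eq_mul] at hfin
  set q := fderiv ℝ (fderiv ℝ F) A η η
  set r := fderiv ℝ F A (η * A⁻¹ * η)
  set p := fderiv ℝ F A η
  set f := F A
  have hf4 : 0 < (f ^ 2) ^ 2 := by positivity
  rw [div_nonpos_iff] at hfin
  have hnum : -(q + 2 * r) * f ^ 2 - -p * (2 * f * p) ≤ 0 := by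
    rcases hfin with h | h
    · linarith [h.2]
    · have := h.1
      norm_num at this ⊢
      linarith
  have h3 : f * (2 * p ^ 2) ≤ f * ((q + 2 * r) * f) := by nlinarith
  have h4 := le_of_mul_le_mul_left h3 hpos
  calc 2 * f⁻¹ * p ^ 2 = (2 * p ^ 2) / f := by ring
    _ ≤ q + 2 * r := by rw [div_le_iff₀ hpos]; exact h4

/-- Let `Γ₊ = {κ | ∀ i, κ i > 0}`, `ψ` of class `C²` on the open
`U ⊆ ℝ^m` with `(p₁(κ),…,p_m(κ)) ∈ U` for all `κ ∈ Γ₊`, and suppose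
`f(κ) = ψ(p₁(κ),…,p_m(κ))` is positive, strictly monotone, homogeneous of degree one
and inverse concave on `Γ₊` (i.e. `κ ↦ (f (κ₁⁻¹, …, κₙ⁻¹))⁻¹` is concave on `Γ₊`). If
`A` is diagonalisable with eigenvalues `κ ∈ Γ₊` and `g`-selfadjoint for a symmetric
positive definite `g`, then for every `g`-selfadjoint `η`,
`d²F(A)(η,η) + 2 dF(A)(η A⁻¹ η) ≥ 2 F(A)⁻¹ (dF(A)η)²`. -/
theorem stmt_16 (n m : ℕ) (U : Set (Fin m → ℝ)) (hU : IsOpen U)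
    (ψ : (Fin m → ℝ) → ℝ) (hψ : ContDiffOn ℝ 2 ψ U)
    (hΓU : ∀ κ : Fin n → ℝ, (∀ i, 0 < κ i) → pvec n m κ ∈ U)
    (hpos : ∀ κ : Fin n → ℝ, (∀ i, 0 < κ i) → 0 < ψ (pvec n m κ))
    (hmono : ∀ κ : Fin n → ℝ, (∀ i, 0 < κ i) → ∀ i : Fin n,
      0 < fderiv ℝ (fun x : Fin n → ℝ => ψ (pvec n m x)) κ (Pi.single i 1))
    (hhom : ∀ (lam : ℝ), 0 < lam → ∀ κ : Fin n → ℝ, (∀ i, 0 < κ i) →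
      ψ (pvec n m (lam • κ)) = lam * ψ (pvec n m κ))
    (hinvconc : ConcaveOn ℝ {κ : Fin n → ℝ | ∀ i, 0 < κ i}
      (fun κ : Fin n → ℝ => (ψ (pvec n m fun i => (κ i)⁻¹))⁻¹))
    (A : Matrix (Fin n) (Fin n) ℝ) (κ : Fin n → ℝ) (hκ : ∀ i, 0 < κ i)
    (S : Matrix (Fin n) (Fin n) ℝ) (hS : IsUnit S)
    (hdiag : S⁻¹ * A * S = Matrix.diagonal κ)
    (g : Matrix (Fin n) (Fin n) ℝ) (hg : g.PosDef) (hgsym : g.IsSymm)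
    (hsa : g * A = Aᵀ * g) :
    ∀ η : Matrix (Fin n) (Fin n) ℝ, g * η = ηᵀ * g →
      fderiv ℝ (fderiv ℝ (fun X : Matrix (Fin n) (Fin n) ℝ => ψ (Pvec n m X))) A η η
          + 2 * fderiv ℝ (fun X : Matrix (Fin n) (Fin n) ℝ => ψ (Pvec n m X)) A
              (η * A⁻¹ * η)
        ≥ 2 * (ψ (Pvec n m A))⁻¹
            * (fderiv ℝ (fun X : Matrix (Fin n) (Fin n) ℝ => ψ (Pvec n m X)) A η) ^ 2 := by
  intro η hη
  obtain ⟨T, B, μ, hT, hμ, hAT, hηT, hB⟩ := aux_simdiag n A κ hκ S hS hdiag g hg hsa η hη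
  have hPA : Pvec n m A = pvec n m μ := by rw [aux_conj n m T A _ hT hAT, aux_diag]
  have hAu : IsUnit A.det := by
    have h1 := congrArg Matrix.det hAT
    rw [Matrix.det_mul, Matrix.det_mul, Matrix.det_diagonal, mul_comm] at h1
    have hTd := (Matrix.isUnit_iff_isUnit_det _).1 hT
    rw [mul_left_cancel₀ hTd.ne_zero h1]
    exact isUnit_iff_ne_zero.2 (Finset.prod_ne_zero_iff.2 fun i _ => (hμ i).ne')
  have hF : ContDiffAt ℝ 2 (fun X : Matrix (Fin n) (Fin n) ℝ => ψ (Pvec n m X)) A := by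
    have h1 : ContDiffAt ℝ 2 ψ (Pvec n m A) := by
      rw [hPA]
      exact hψ.contDiffAt (hU.mem_nhds (hΓU μ hμ))
    exact h1.comp A (aux_contDiff_Pvec n m).contDiffAt
  refine aux_calc n (fun X : Matrix (Fin n) (Fin n) ℝ => ψ (Pvec n m X)) A η hAu hF ?_ ?_
  · simp only [hPA]; exact hpos μ hμ
  · exact aux_main_ineq n m ψ hinvconc A T B η μ hT hμ hAT hηT hAu hB
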